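/- Let a > 0 be a real number and j ≥ 1 a natural number with e·a < j. Then the tail of the exponential series satisfies ∑_{m=j}^∞ a^m/m! ≤ (1/√(2πj)) · (e·a/j)^j · (j/(j − e·a)). -/

import Mathlib

/-! Each term of the exponential series beyond `a ^ j / j!` is at most `a / j` times its
predecessor, so the tail is dominated by a geometric series of ratio `a / j < 1`, whose leading
term is bounded by Stirling's formula. Weakening the ratio to `exp 1 * a / j` gives the stated
factor `j / (j - exp 1 * a)`. -/

theorem pow_add_div_factorial_le {K : Type*} [Field K] [LinearOrder K] [IsStrictOrderedRing K]
    {a : K} (ha : 0 ≤ a) {j : ℕ} (hj : j ≠ 0) (m : ℕ) :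
    a ^ (j + m) / ((j + m).factorial : K) ≤ a ^ j / (j.factorial : K) * (a / j) ^ m := by
  have factorial_growth : (j.factorial : K) * (j : K) ^ m ≤ ((j + m).factorial : K) := by
    have h := Nat.factorial_mul_pow_sub_le_factorial (Nat.le_add_right j m)
    rw [Nat.add_sub_cancel_left] at h
    exact_mod_cast h
  calc a ^ (j + m) / ((j + m).factorial : K)
      ≤ a ^ (j + m) / ((j.factorial : K) * (j : K) ^ m) := by gcongr
    _ = a ^ j / (j.factorial : K) * (a / j) ^ m := by
      rw [pow_add, div_pow, mul_div_mul_comm]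

theorem tsum_pow_add_div_factorial_le {a : ℝ} (ha : 0 ≤ a) {j : ℕ} (haj : a < j) :
    ∑' m : ℕ, a ^ (j + m) / ((j + m).factorial : ℝ) ≤
      a ^ j / (j.factorial : ℝ) * (j / (j - a)) := by
  have hj : (0 : ℝ) < j := ha.trans_lt haj
  have summable_tail : Summable fun m : ℕ ↦ a ^ (j + m) / ((j + m).factorial : ℝ) :=
    (Real.summable_pow_div_factorial a).comp_injective (add_right_injective j)
  have hasSum_geometric : HasSum (fun m : ℕ ↦ (a / j) ^ m) (j / (j - a)) := by
    rw [← inv_div (j - a : ℝ), ← one_sub_div hj.ne']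
    exact hasSum_geometric_of_lt_one (by positivity) ((div_lt_one hj).2 haj)
  exact hasSum_le (pow_add_div_factorial_le ha (Nat.cast_pos.1 hj).ne')
    summable_tail.hasSum (hasSum_geometric.mul_left _)

theorem pow_div_factorial_le_stirling {a : ℝ} (ha : 0 ≤ a) {n : ℕ} (hn : n ≠ 0) :
    a ^ n / (n.factorial : ℝ) ≤
      1 / Real.sqrt (2 * Real.pi * n) * (Real.exp 1 * a / n) ^ n := by
  calc a ^ n / (n.factorial : ℝ)
      ≤ a ^ n / (Real.sqrt (2 * Real.pi * n) * (n / Real.exp 1) ^ n) := by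
        gcongr
        exact Stirling.le_factorial_stirling n
    _ = 1 / Real.sqrt (2 * Real.pi * n) * (Real.exp 1 * a / n) ^ n := by
        rw [← one_mul (a ^ n), mul_div_mul_comm, ← div_pow, div_div_eq_mul_div, mul_comm a]

theorem exp_series_tail_stirling_bound_general {a : ℝ} (ha : 0 ≤ a) {j : ℕ} (haj : a < j) :
    ∑' m : ℕ, a ^ (j + m) / ((j + m).factorial : ℝ) ≤
      (1 / Real.sqrt (2 * Real.pi * j)) * (Real.exp 1 * a / j) ^ j * (j / (j - a)) := by
  have hj : j ≠ 0 := (Nat.cast_pos.1 (ha.trans_lt haj)).ne'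
  have hfactor : 0 ≤ (j : ℝ) / (j - a) := div_nonneg j.cast_nonneg (sub_nonneg.2 haj.le)
  exact (tsum_pow_add_div_factorial_le ha haj).trans
    (mul_le_mul_of_nonneg_right (pow_div_factorial_le_stirling ha hj) hfactor)

/-- For real `a > 0` and natural `j ≥ 1` with `e * a < j`, the tail of the
exponential series satisfies
`∑_{m=j}^∞ a^m/m! ≤ (1/√(2πj)) * (e a / j)^j * (j/(j - e a))`. -/
theorem exp_series_tail_stirling_bound (a : ℝ) (ha : 0 < a) (j : ℕ) (hj : 1 ≤ j)
    (hja : Real.exp 1 * a < j) :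
    ∑' m : ℕ, a ^ (j + m) / ((j + m).factorial : ℝ) ≤
      (1 / Real.sqrt (2 * Real.pi * j)) * (Real.exp 1 * a / j) ^ j *
        (j / ((j : ℝ) - Real.exp 1 * a)) := by
  have hae : a ≤ Real.exp 1 * a := le_mul_of_one_le_left ha.le (Real.one_le_exp zero_le_one)
  exact (exp_series_tail_stirling_bound_general ha.le (hae.trans_lt hja)).trans (by gcongr)
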